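/- Let Ω ⊆ ℝ^d be a bounded open set and f : cl(Ω) → [0,∞) continuous. Let u : cl(Ω) → ℝ be upper semicontinuous and a viscosity subsolution of the Bellman equation in Ω (for every φ ∈ C²(Ω) such that u − φ attains a local maximum at x ∈ Ω, H(D²φ(x), f(x)) ≤ 0), and let v : cl(Ω) → ℝ be lower semicontinuous and a viscosity supersolution of the Bellman equation in Ω (for every φ ∈ C²(Ω) such that v − φ attains a local minimum at x ∈ Ω, H(D²φ(x), f(x)) ≥ 0). If u ≤ v on the boundary ∂Ω, then u ≤ v on all of cl(Ω). -/

import Mathlib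

open Matrix Set

/-- The set 𝐒₁ of positive semidefinite symmetric d×d real matrices with unit trace. -/
def S1set (d : ℕ) : Set (Matrix (Fin d) (Fin d) ℝ) :=
  {B | B.PosSemidef ∧ B.trace = 1}

/-- The value −B:A + f·(det B)^(1/d) appearing under the supremum of the Bellman operator. -/
noncomputable def bval (d : ℕ) (A B : Matrix (Fin d) (Fin d) ℝ) (f : ℝ) : ℝ :=
  -((B * A).trace) + f * B.det ^ ((1 : ℝ) / d)

/-- The Bellman operator H(A,f) = sup_{B ∈ 𝐒₁} (−B:A + f·(det B)^(1/d)). -/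
noncomputable def bellman (d : ℕ) (A : Matrix (Fin d) (Fin d) ℝ) (f : ℝ) : ℝ :=
  sSup ((fun B => bval d A B f) '' S1set d)

/-- The Monge–Ampère operator M(A,f) = (f/d)^d − det A. -/
noncomputable def MAop (d : ℕ) (A : Matrix (Fin d) (Fin d) ℝ) (f : ℝ) : ℝ :=
  (f / d) ^ d - A.det

/-- The Hessian matrix D²φ(x) of φ : ℝ^d → ℝ at x. -/
noncomputable def hessianM (d : ℕ) (φ : (Fin d → ℝ) → ℝ) (x : Fin d → ℝ) :
    Matrix (Fin d) (Fin d) ℝ :=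
  fun i j => iteratedFDeriv ℝ 2 φ x ![Pi.single i 1, Pi.single j 1]

open Filter Topology

/-! ### calculus -/

lemma aux_taylor {E : Type*} [NormedAddCommGroup E] [NormedSpace ℝ E] (φ : E → ℝ)
    (hφ : ContDiff ℝ 2 φ) (x : E) (ε : ℝ) (hε : 0 < ε) :
    ∃ δ > 0, ∀ y : E, ‖y‖ < δ →
      |φ (x + y) - φ x - fderiv ℝ φ x y - (1/2) * fderiv ℝ (fderiv ℝ φ) x y y| ≤ ε * ‖y‖ ^ 2 := by
  have hd1 : Differentiable ℝ φ := hφ.differentiable (by norm_num)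
  have hd2 : Differentiable ℝ (fderiv ℝ φ) :=
    (hφ.fderiv_right (m := 1) (by norm_num)).differentiable (by norm_num)
  have hsym : ∀ a b, fderiv ℝ (fderiv ℝ φ) x a b = fderiv ℝ (fderiv ℝ φ) x b a := by
    intro a b
    exact (hφ.contDiffAt.isSymmSndFDerivAt (by simp)) a b
  have h0 := (hd2 x).hasFDerivAt
  rw [hasFDerivAt_iff_isLittleO_nhds_zero] at h0
  have h1 := h0.def hε
  obtain ⟨δ, hδ, hb⟩ := Metric.eventually_nhds_iff_ball.1 h1
  refine ⟨δ, hδ, fun y hy => ?_⟩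
  set A := fderiv ℝ (fderiv ℝ φ) x with hA
  set R : E → ℝ := fun y => φ (x + y) - φ x - fderiv ℝ φ x y - (1/2) * A y y with hR
  have hder : ∀ z, HasFDerivAt R (fderiv ℝ φ (x + z) - fderiv ℝ φ x - A z) z := by
    intro z
    have e1 : HasFDerivAt (fun y => φ (x + y)) (fderiv ℝ φ (x + z)) z := by
      have := (hd1 (x + z)).hasFDerivAt
      exact (hasFDerivAt_comp_add_left (f := φ) x).2 this
    have e2 : HasFDerivAt (fun y => (A y) y) (A z + A.flip z) z := by
      have := (A.hasFDerivAt (x := z)).clm_apply (hasFDerivAt_id z)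
      exact this
    have e3 := ((e1.sub_const (φ x)).sub ((fderiv ℝ φ x).hasFDerivAt (x := z))).sub (e2.const_mul (1/2))
    refine HasFDerivAt.congr_fderiv e3 ?_
    refine ContinuousLinearMap.ext fun w => ?_
    simp [hsym w z]
    ring
  have hR0 : R 0 = 0 := by simp [hR]
  have hseg : ∀ z ∈ Metric.closedBall (0:E) ‖y‖, ‖fderiv ℝ φ (x + z) - fderiv ℝ φ x - A z‖ ≤ ε * ‖y‖ := by
    intro z hz
    have hz' : ‖z‖ ≤ ‖y‖ := by simpa using hz
    have := hb z (by simpa using lt_of_le_of_lt hz' hy)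
    exact this.trans (by gcongr)
  have := (convex_closedBall (0:E) ‖y‖).norm_image_sub_le_of_norm_hasFDerivWithin_le
    (f := R) (fun z _ => (hder z).hasFDerivWithinAt) hseg (x := 0) (y := y) (by simp) (by simp)
  rw [hR0, sub_zero, sub_zero, Real.norm_eq_abs] at this
  calc _ = |R y| := rfl
    _ ≤ ε * ‖y‖ * ‖y‖ := this
    _ = _ := by ring

lemma aux_second_order {E : Type*} [NormedAddCommGroup E] [NormedSpace ℝ E] (φ : E → ℝ)
    (hφ : ContDiff ℝ 2 φ) (x : E) (hx : IsLocalMax φ x) (y : E) :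
    fderiv ℝ (fderiv ℝ φ) x y y ≤ 0 := by
  have hz : fderiv ℝ φ x = 0 := hx.fderiv_eq_zero
  have key : ∀ ε > 0, fderiv ℝ (fderiv ℝ φ) x y y ≤ ε * (2 * ‖y‖^2) := by
    intro ε hε
    obtain ⟨δ, hδ, h⟩ := aux_taylor φ hφ x ε hε
    have hc : Tendsto (fun t : ℝ => t • y) (𝓝[>] 0) (𝓝 0) := by
      have : Continuous (fun t : ℝ => t • y) := by fun_prop
      have h2 := this.tendsto 0
      simp only [zero_smul] at h2
      exact h2.mono_left nhdsWithin_le_nhds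
    have hc2 : Tendsto (fun t : ℝ => x + t • y) (𝓝[>] 0) (𝓝 x) := by
      simpa using hc.const_add x
    have e1 := hc2.eventually hx
    have e2 := hc.eventually (Metric.ball_mem_nhds 0 hδ)
    obtain ⟨t, ⟨h1, h2⟩, ht⟩ := ((e1.and e2).and self_mem_nhdsWithin).exists
    have ht : 0 < t := ht
    have h2' : ‖t • y‖ < δ := by simpa using h2
    have h3 := h _ h2'
    rw [hz] at h3
    simp only [map_smul, _root_.zero_apply, _root_.smul_apply, smul_eq_mul, norm_smul] at h3
    rw [Real.norm_of_nonneg ht.le] at h3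
    have h4 := (abs_le.1 h3).1
    have h5 : t^2 * (fderiv ℝ (fderiv ℝ φ) x y y) ≤ t^2 * (ε * (2 * ‖y‖^2)) := by nlinarith
    exact le_of_mul_le_mul_left h5 (by positivity)
  by_contra hcon
  push Not at hcon
  set a := fderiv ℝ (fderiv ℝ φ) x y y
  have := key (a / (2 * (2 * ‖y‖^2 + 1))) (by positivity)
  rw [div_mul_eq_mul_div, le_div_iff₀ (by positivity)] at this
  nlinarith [sq_nonneg ‖y‖]

lemma hessianM_apply (d : ℕ) (φ : (Fin d → ℝ) → ℝ) (x : Fin d → ℝ) (i j : Fin d) :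
    hessianM d φ x i j = fderiv ℝ (fderiv ℝ φ) x (Pi.single i 1) (Pi.single j 1) := by
  simp [hessianM, iteratedFDeriv_two_apply]

lemma hessianM_bilin (d : ℕ) (φ : (Fin d → ℝ) → ℝ) (x : Fin d → ℝ) (a b : Fin d → ℝ) :
    fderiv ℝ (fderiv ℝ φ) x a b = ∑ i, ∑ j, a i * b j * hessianM d φ x i j := by
  simp only [hessianM_apply]
  conv_lhs => rw [pi_eq_sum_univ' a, pi_eq_sum_univ' b]
  simp only [map_sum, _root_.sum_apply, map_smul, _root_.smul_apply, smul_eq_mul,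
    Finset.mul_sum]
  rw [Finset.sum_comm]
  refine Finset.sum_congr rfl fun i _ => Finset.sum_congr rfl fun j _ => ?_
  ring

/-- trace pairing -/
noncomputable def trH (d : ℕ) (B : Matrix (Fin d) (Fin d) ℝ) (φ : (Fin d → ℝ) → ℝ) (x : Fin d → ℝ) : ℝ :=
  (B * hessianM d φ x).trace

lemma trH_eq (d : ℕ) (B : Matrix (Fin d) (Fin d) ℝ) (φ : (Fin d → ℝ) → ℝ) (x : Fin d → ℝ) :
    trH d B φ x = ∑ i, ∑ j, B i j * hessianM d φ x j i := by
  simp [trH, Matrix.trace, Matrix.mul_apply]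

lemma trH_nonpos (d : ℕ) (B : Matrix (Fin d) (Fin d) ℝ) (hB : B.PosSemidef) (φ : (Fin d → ℝ) → ℝ)
    (hφ : ContDiff ℝ 2 φ) (x : Fin d → ℝ) (hx : IsLocalMax φ x) : trH d B φ x ≤ 0 := by
  obtain ⟨A, rfl⟩ : ∃ A : Matrix (Fin d) (Fin d) ℝ, B = Aᴴ * A := by
    open scoped MatrixOrder in
    exact CStarAlgebra.nonneg_iff_eq_star_mul_self.1 (Matrix.nonneg_iff_posSemidef.2 hB)
  have h := fun k => aux_second_order φ hφ x hx (A k)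
  have : trH d (Aᴴ * A) φ x = ∑ k, fderiv ℝ (fderiv ℝ φ) x (A k) (A k) := by
    rw [trH_eq]
    simp only [hessianM_bilin, Matrix.mul_apply, Matrix.conjTranspose_apply, star_trivial, Finset.sum_mul]
    rw [Finset.sum_comm]
    rw [Finset.sum_congr rfl fun i _ => Finset.sum_comm]
    rw [Finset.sum_comm]
    refine Finset.sum_congr rfl fun i _ => Finset.sum_congr rfl fun j _ => Finset.sum_congr rfl fun k _ => ?_
    ring
  rw [this]
  exact Finset.sum_nonpos fun k _ => h k

lemma trH_add (d : ℕ) (B : Matrix (Fin d) (Fin d) ℝ) (φ ψ : (Fin d → ℝ) → ℝ)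
    (hφ : ContDiff ℝ 2 φ) (hψ : ContDiff ℝ 2 ψ) (x : Fin d → ℝ) :
    trH d B (fun y => φ y + ψ y) x = trH d B φ x + trH d B ψ x := by
  have : hessianM d (fun y => φ y + ψ y) x = hessianM d φ x + hessianM d ψ x := by
    ext i j
    have := iteratedFDeriv_add_apply (x := x) (i := 2) (𝕜 := ℝ) hφ.contDiffAt hψ.contDiffAt
    have h2 : (fun y => φ y + ψ y) = φ + ψ := rfl
    simp only [hessianM, h2, this, Matrix.add_apply]
    rfl
  simp [trH, this, Matrix.mul_add]

/-! ### polynomials -/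

lemma poly_contDiff {d : ℕ} (p : MvPolynomial (Fin d) ℝ) :
    ContDiff ℝ 2 (fun x : Fin d → ℝ => MvPolynomial.eval x p) := by
  induction p using MvPolynomial.induction_on with
  | C a => simpa using contDiff_const
  | add p q hp hq => simpa using hp.add hq
  | mul_X p i hp => simpa using hp.mul (contDiff_apply ℝ ℝ i)

lemma poly_fderiv {d : ℕ} (p : MvPolynomial (Fin d) ℝ) (x : Fin d → ℝ) (j : Fin d) :
    fderiv ℝ (fun x : Fin d → ℝ => MvPolynomial.eval x p) x (Pi.single j 1)
      = MvPolynomial.eval x (MvPolynomial.pderiv j p) := by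
  have hdiff : ∀ p : MvPolynomial (Fin d) ℝ, DifferentiableAt ℝ (fun x : Fin d → ℝ => MvPolynomial.eval x p) x :=
    fun p => (poly_contDiff p).differentiable (by norm_num) x
  induction p using MvPolynomial.induction_on with
  | C a => simp
  | add p q hp hq =>
    simp only [map_add]
    rw [fderiv_fun_add (hdiff p) (hdiff q)]
    simp [hp, hq]
  | mul_X p i hp =>
    simp only [map_mul, MvPolynomial.eval_X]
    rw [fderiv_fun_mul (hdiff p) (differentiableAt_apply i x)]
    have : fderiv ℝ (fun x : Fin d → ℝ => x i) x = ContinuousLinearMap.proj i :=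
      (ContinuousLinearMap.proj (R := ℝ) (φ := fun _ : Fin d => ℝ) i).fderiv
    rw [this, MvPolynomial.pderiv_mul]
    simp only [_root_.add_apply, _root_.smul_apply, hp, smul_eq_mul,
      ContinuousLinearMap.proj_apply, map_add, map_mul, MvPolynomial.eval_X, MvPolynomial.pderiv_X]
    by_cases h : i = j
    · subst h; simp; ring
    · simp [h]; ring

lemma poly_hess {d : ℕ} (p : MvPolynomial (Fin d) ℝ) (x : Fin d → ℝ) (i j : Fin d) :
    hessianM d (fun x : Fin d → ℝ => MvPolynomial.eval x p) x i j
      = MvPolynomial.eval x (MvPolynomial.pderiv i (MvPolynomial.pderiv j p)) := by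
  rw [hessianM_apply, ← poly_fderiv]
  have h : (fun x : Fin d → ℝ => MvPolynomial.eval x (MvPolynomial.pderiv j p)) =
    fun x => fderiv ℝ (fun x : Fin d → ℝ => MvPolynomial.eval x p) x (Pi.single j 1) := by
    ext x; rw [poly_fderiv]
  rw [h]
  have hd2 : Differentiable ℝ (fderiv ℝ (fun x : Fin d → ℝ => MvPolynomial.eval x p)) :=
    ((poly_contDiff p).fderiv_right (m := 1) (by norm_num)).differentiable (by norm_num)
  rw [fderiv_clm_apply (hd2 x) (by fun_prop)]
  simp

/-- The constant coefficient operator `∑ B i j ∂i ∂j` on polynomials. -/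
noncomputable def Lop {d : ℕ} (B : Matrix (Fin d) (Fin d) ℝ) :
    MvPolynomial (Fin d) ℝ →ₗ[ℝ] MvPolynomial (Fin d) ℝ :=
  ∑ i, ∑ j, B i j • ((MvPolynomial.pderiv j).toLinearMap ∘ₗ (MvPolynomial.pderiv i).toLinearMap)

lemma Lop_apply {d : ℕ} (B : Matrix (Fin d) (Fin d) ℝ) (p : MvPolynomial (Fin d) ℝ) :
    Lop B p = ∑ i, ∑ j, B i j • MvPolynomial.pderiv j (MvPolynomial.pderiv i p) := by
  simp [Lop, LinearMap.sum_apply]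

lemma trH_poly {d : ℕ} (B : Matrix (Fin d) (Fin d) ℝ) (p : MvPolynomial (Fin d) ℝ) (x : Fin d → ℝ) :
    trH d B (fun x => MvPolynomial.eval x p) x = MvPolynomial.eval x (Lop B p) := by
  rw [trH_eq, Lop_apply]
  simp [poly_hess, MvPolynomial.smul_eval]

/-- `∑ (X i)^2`. -/
noncomputable def NSQ (d : ℕ) : MvPolynomial (Fin d) ℝ := ∑ i, MvPolynomial.X i * MvPolynomial.X i

lemma Lop_XX {d : ℕ} (B : Matrix (Fin d) (Fin d) ℝ) (hB : B.PosSemidef) (i j : Fin d) :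
    Lop B (MvPolynomial.X i * MvPolynomial.X j) = MvPolynomial.C (2 * B i j) := by
  have hs : B j i = B i j := by have := hB.1.apply i j; simpa using this
  rw [Lop_apply]
  have : ∀ k l, B k l • MvPolynomial.pderiv l (MvPolynomial.pderiv k (MvPolynomial.X i * MvPolynomial.X j : MvPolynomial (Fin d) ℝ))
    = (if k = i then if l = j then MvPolynomial.C (B k l) else 0 else 0) + (if k = j then if l = i then MvPolynomial.C (B k l) else 0 else 0) := by
    intro k l
    rw [MvPolynomial.pderiv_mul]
    have e : ∀ a b : Fin d, MvPolynomial.pderiv a (MvPolynomial.X b : MvPolynomial (Fin d) ℝ)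
        = MvPolynomial.C (if a = b then 1 else 0) := by
      intro a b
      by_cases h : b = a
      · simp [h]
      · rw [MvPolynomial.pderiv_X_of_ne h, if_neg (Ne.symm h), map_zero]
    rw [e, e, MvPolynomial.smul_eq_C_mul, map_add, MvPolynomial.pderiv_C_mul, mul_comm (MvPolynomial.X i),
      MvPolynomial.pderiv_C_mul, e, e]
    split_ifs <;> simp [mul_add]
  simp only [this, Finset.sum_add_distrib]
  simp only [Finset.sum_ite_irrel, Finset.sum_ite_eq', Finset.sum_const_zero, Finset.mem_univ, if_true, hs]
  rw [two_mul, map_add]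

lemma Lop_NSQ {d : ℕ} (B : Matrix (Fin d) (Fin d) ℝ) (hB : B ∈ S1set d) :
    Lop B (NSQ d) = MvPolynomial.C 2 := by
  have h2 : ∑ i, B i i = 1 := hB.2
  rw [NSQ, map_sum, Finset.sum_congr rfl fun i _ => Lop_XX B hB.1 i i, ← map_sum, ← Finset.mul_sum, h2]
  simp

lemma Lop_C {d : ℕ} (B : Matrix (Fin d) (Fin d) ℝ) (a : ℝ) : Lop B (MvPolynomial.C a) = 0 := by
  simp [Lop_apply]

lemma Lop_X {d : ℕ} (B : Matrix (Fin d) (Fin d) ℝ) (i : Fin d) : Lop B (MvPolynomial.X i) = 0 := by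
  rw [Lop_apply]
  refine Finset.sum_eq_zero fun k _ => Finset.sum_eq_zero fun l _ => ?_
  by_cases h : i = k <;> simp [h]

lemma eval_NSQ {d : ℕ} (x : Fin d → ℝ) : MvPolynomial.eval x (NSQ d) = x ⬝ᵥ x := by
  simp [NSQ, dotProduct]

/-! ### Maximum principle and Dirichlet problem for polynomials -/

/-- viscosity subsolution of `B : D² w ≥ 0` in the unit ball, with polynomial tests -/
def VisSub {d : ℕ} (B : Matrix (Fin d) (Fin d) ℝ) (w : (Fin d → ℝ) → ℝ) : Prop :=
  ∀ q : MvPolynomial (Fin d) ℝ, ∀ y : Fin d → ℝ, y ⬝ᵥ y < 1 →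
    IsLocalMax (fun z => w z - MvPolynomial.eval z q) y → 0 ≤ MvPolynomial.eval y (Lop B q)

lemma cont_dot (d : ℕ) : Continuous (fun y : Fin d → ℝ => y ⬝ᵥ y) := by
  unfold dotProduct; fun_prop

lemma dot_sq_le {d : ℕ} (y : Fin d → ℝ) (i : Fin d) : y i ^ 2 ≤ y ⬝ᵥ y := by
  have := Finset.single_le_sum (f := fun i => y i * y i) (fun i _ => mul_self_nonneg (y i)) (Finset.mem_univ i)
  simp only [dotProduct]; nlinarith

lemma norm_sq_le_dot {d : ℕ} (y : Fin d → ℝ) : ‖y‖ ^ 2 ≤ y ⬝ᵥ y := by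
  have h0 : 0 ≤ y ⬝ᵥ y := Finset.sum_nonneg fun i _ => mul_self_nonneg (y i)
  have : ‖y‖ ≤ √(y ⬝ᵥ y) := by
    rw [pi_norm_le_iff_of_nonneg (Real.sqrt_nonneg _)]
    intro i
    rw [Real.norm_eq_abs]
    exact Real.abs_le_sqrt (dot_sq_le y i)
  calc ‖y‖^2 ≤ √(y ⬝ᵥ y)^2 := by gcongr
    _ = _ := Real.sq_sqrt h0

lemma compact_D (d : ℕ) : IsCompact {y : Fin d → ℝ | y ⬝ᵥ y ≤ 1} := by
  refine Metric.isCompact_of_isClosed_isBounded (isClosed_le (cont_dot d) continuous_const) ?_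
  refine (Metric.isBounded_closedBall (x := (0 : Fin d → ℝ)) (r := 1)).subset fun y hy => ?_
  have h := (norm_sq_le_dot y).trans hy
  simp only [Metric.mem_closedBall, dist_zero_right]
  nlinarith [norm_nonneg y]

lemma poly_cont {d : ℕ} (p : MvPolynomial (Fin d) ℝ) :
    Continuous (fun x : Fin d → ℝ => MvPolynomial.eval x p) := (poly_contDiff p).continuous

lemma vsub_comp {d : ℕ} {B : Matrix (Fin d) (Fin d) ℝ} (hB : B ∈ S1set d) {w : (Fin d → ℝ) → ℝ}
    (hw : VisSub B w) (hwc : ContinuousOn w {y | y ⬝ᵥ y ≤ 1})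
    (h : MvPolynomial (Fin d) ℝ) (hh : Lop B h = 0)
    (hle : ∀ y, y ⬝ᵥ y = 1 → w y ≤ MvPolynomial.eval y h) :
    ∀ y, y ⬝ᵥ y ≤ 1 → w y ≤ MvPolynomial.eval y h := by
  intro y hy
  refine le_of_forall_pos_le_add fun ε hε => ?_
  set q : MvPolynomial (Fin d) ℝ := h - ε • (NSQ d - MvPolynomial.C 1) with hq
  have hqe : ∀ z, MvPolynomial.eval z q = MvPolynomial.eval z h - ε * (z ⬝ᵥ z - 1) := by
    intro z; simp [hq, MvPolynomial.smul_eval, eval_NSQ]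
  have hqL : ∀ z, MvPolynomial.eval z (Lop B q) = - (2 * ε) := by
    intro z
    simp [hq, hh, Lop_NSQ B hB, MvPolynomial.smul_eval]
    have : Lop B (1 : MvPolynomial (Fin d) ℝ) = 0 := by simpa using Lop_C B 1
    simp [this]; ring
  obtain ⟨y0, hy0, hmax⟩ := (compact_D d).exists_isMaxOn ⟨y, hy⟩
    (f := fun z => w z - MvPolynomial.eval z q) (hwc.sub (poly_cont q).continuousOn)
  have hy0' : y0 ⬝ᵥ y0 ≤ 1 := hy0
  have hb : y0 ⬝ᵥ y0 = 1 := by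
    by_contra hne
    have hlt : y0 ⬝ᵥ y0 < 1 := lt_of_le_of_ne hy0' hne
    have hnb : {y : Fin d → ℝ | y ⬝ᵥ y ≤ 1} ∈ 𝓝 y0 :=
      mem_of_superset ((isOpen_lt (cont_dot d) continuous_const).mem_nhds hlt) fun z (hz : z ⬝ᵥ z < 1) => show z ⬝ᵥ z ≤ 1 from hz.le
    have := hw q y0 hlt (hmax.isLocalMax hnb)
    rw [hqL] at this
    linarith
  have h1 := hmax hy
  have h2 := hle y0 hb
  simp only [Set.mem_ofPred_eq, hqe, hb] at h1
  have : 0 ≤ y ⬝ᵥ y := Finset.sum_nonneg fun i _ => mul_self_nonneg (y i)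
  nlinarith

lemma vsub_poly {d : ℕ} {B : Matrix (Fin d) (Fin d) ℝ} (hB : B ∈ S1set d)
    (p : MvPolynomial (Fin d) ℝ) (hp : Lop B p = 0) : VisSub B (fun y => MvPolynomial.eval y p) := by
  intro q y hy hmax
  have h := trH_nonpos d B hB.1 (fun z => MvPolynomial.eval z (p - q)) (poly_contDiff _) y (by simpa using hmax)
  rw [trH_poly] at h
  simpa [hp] using h

lemma poly_max {d : ℕ} {B : Matrix (Fin d) (Fin d) ℝ} (hB : B ∈ S1set d)
    (p : MvPolynomial (Fin d) ℝ) (hp : Lop B p = 0) (M : ℝ)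
    (hle : ∀ y, y ⬝ᵥ y = 1 → MvPolynomial.eval y p ≤ M) :
    ∀ y, y ⬝ᵥ y ≤ 1 → MvPolynomial.eval y p ≤ M := by
  intro y hy
  have := vsub_comp hB (vsub_poly hB p hp) (poly_cont p).continuousOn (MvPolynomial.C M) (Lop_C _ _)
    (by simpa using hle) y hy
  simpa using this

/-- `q ↦ L((1-|x|²) q)`. -/
noncomputable def Top' {d : ℕ} (B : Matrix (Fin d) (Fin d) ℝ) :
    MvPolynomial (Fin d) ℝ →ₗ[ℝ] MvPolynomial (Fin d) ℝ :=
  Lop B ∘ₗ LinearMap.mulLeft ℝ (1 - NSQ d)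

lemma Top'_apply {d : ℕ} (B : Matrix (Fin d) (Fin d) ℝ) (q : MvPolynomial (Fin d) ℝ) :
    Top' B q = Lop B ((1 - NSQ d) * q) := rfl

lemma Top'_inj {d : ℕ} (hd : 2 ≤ d) {B : Matrix (Fin d) (Fin d) ℝ} (hB : B ∈ S1set d) :
    Function.Injective (Top' B) := by
  rw [injective_iff_map_eq_zero]
  intro q hq
  rw [Top'_apply] at hq
  have h1 := poly_max hB _ hq 0 (by intro y hy; simp [eval_NSQ, hy])
  have h2 := poly_max hB (-((1 - NSQ d) * q)) (by rw [map_neg, hq, neg_zero]) 0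
    (by intro y hy; simp [eval_NSQ, hy])
  have h3 : ∀ y, y ⬝ᵥ y < 1 → MvPolynomial.eval y q = 0 := by
    intro y hy
    have a := h1 y hy.le
    have b := h2 y hy.le
    simp only [map_neg, map_mul, map_sub, map_one, eval_NSQ] at a b
    have : (1 - y ⬝ᵥ y) * MvPolynomial.eval y q = 0 := by linarith
    rcases mul_eq_zero.1 this with h | h
    · linarith
    · exact h
  refine MvPolynomial.funext_set (fun _ => Set.Icc (0:ℝ) (1 / d)) (fun _ => Set.Icc_infinite (by positivity)) ?_
  intro x hx
  rw [h3 x ?_, map_zero]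
  have hx' : ∀ i, 0 ≤ x i ∧ x i ≤ 1 / d := fun i => hx i (mem_univ i)
  have hd' : (2:ℝ) ≤ d := by exact_mod_cast hd
  calc x ⬝ᵥ x ≤ ∑ i : Fin d, (1 / d : ℝ) * (1/d) :=
        Finset.sum_le_sum fun i _ => mul_le_mul (hx' i).2 (hx' i).2 (hx' i).1 (by positivity)
    _ = 1 / d := by simp; field_simp
    _ < 1 := by rw [div_lt_one (by linarith)]; linarith

lemma degree_pderiv {d : ℕ} (p : MvPolynomial (Fin d) ℝ) (i : Fin d) :
    (MvPolynomial.pderiv i p).totalDegree ≤ p.totalDegree - 1 := by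
  refine Finset.sup_le fun m hm => ?_
  rw [MvPolynomial.mem_support_iff, MvPolynomial.coeff_pderiv] at hm
  have h := MvPolynomial.le_totalDegree (MvPolynomial.mem_support_iff.2 (left_ne_zero_of_mul hm))
  rw [Finsupp.sum_add_index' (by simp) (by simp)] at h
  simp at h
  omega

lemma Top'_deg {d : ℕ} (B : Matrix (Fin d) (Fin d) ℝ) (q : MvPolynomial (Fin d) ℝ) (n : ℕ)
    (hq : q.totalDegree ≤ n) : (Top' B q).totalDegree ≤ n := by
  rw [Top'_apply, Lop_apply]
  have h1 : ((1 - NSQ d) * q).totalDegree ≤ n + 2 := by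
    refine (MvPolynomial.totalDegree_mul _ _).trans ?_
    have : (1 - NSQ d).totalDegree ≤ 2 := by
      refine (MvPolynomial.totalDegree_sub _ _).trans ?_
      simp only [MvPolynomial.totalDegree_one, zero_le, sup_of_le_right]
      refine MvPolynomial.totalDegree_finsetSum_le fun i _ => ?_
      refine (MvPolynomial.totalDegree_mul _ _).trans ?_
      simp [MvPolynomial.totalDegree_X]
    omega
  refine MvPolynomial.totalDegree_finsetSum_le fun i _ => MvPolynomial.totalDegree_finsetSum_le fun j _ => ?_
  refine (MvPolynomial.totalDegree_smul_le _ _).trans ?_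
  have a := degree_pderiv ((1 - NSQ d) * q) i
  have b := degree_pderiv (MvPolynomial.pderiv i ((1 - NSQ d) * q)) j
  omega

lemma Top'_surj {d : ℕ} (hd : 2 ≤ d) {B : Matrix (Fin d) (Fin d) ℝ} (hB : B ∈ S1set d) :
    Function.Surjective (Top' B) := by
  intro p
  set n := p.totalDegree
  let V := MvPolynomial.restrictTotalDegree (Fin d) ℝ n
  have hV : ∀ q ∈ V, Top' B q ∈ V := by
    intro q hq
    rw [MvPolynomial.mem_restrictTotalDegree] at hq ⊢
    exact Top'_deg B q n hq
  have hinj : Function.Injective ((Top' B).restrict hV) := by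
    intro a b hab
    exact Subtype.ext (Top'_inj hd hB (congrArg Subtype.val hab))
  have hsurj := LinearMap.injective_iff_surjective.1 hinj
  obtain ⟨q, hq⟩ := hsurj ⟨p, (MvPolynomial.mem_restrictTotalDegree _ _ _).2 le_rfl⟩
  exact ⟨q, congrArg Subtype.val hq⟩

lemma exists_lam {d : ℕ} (hd : 2 ≤ d) {B : Matrix (Fin d) (Fin d) ℝ} (hB : B ∈ S1set d) :
    ∃ lam : MvPolynomial (Fin d) ℝ →ₗ[ℝ] ℝ,
      (∀ p, ∃ h, Lop B h = 0 ∧ (∀ y, y ⬝ᵥ y = 1 → MvPolynomial.eval y h = MvPolynomial.eval y p) ∧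
        MvPolynomial.eval 0 h = lam p) ∧
      (∀ a, lam (MvPolynomial.C a) = a) ∧ (∀ i, lam (MvPolynomial.X i) = 0) ∧
      (∀ i j, lam (MvPolynomial.X i * MvPolynomial.X j) = B i j) := by
  let Te := LinearEquiv.ofBijective (Top' B) ⟨Top'_inj hd hB, Top'_surj hd hB⟩
  let ev : MvPolynomial (Fin d) ℝ →ₗ[ℝ] ℝ := (MvPolynomial.aeval (0 : Fin d → ℝ)).toLinearMap
  have hev : ∀ p, ev p = MvPolynomial.eval 0 p := fun p => by
    simp [ev, MvPolynomial.aeval_def, MvPolynomial.eval₂_eq_eval_map]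
  have hTe : ∀ p, Top' B (Te.symm p) = p := fun p => Te.apply_symm_apply p
  refine ⟨ev - ev ∘ₗ Te.symm.toLinearMap ∘ₗ Lop B, ?_, ?_, ?_, ?_⟩
  · intro p
    refine ⟨p - (1 - NSQ d) * Te.symm (Lop B p), ?_, ?_, ?_⟩
    · rw [map_sub, ← Top'_apply, hTe, sub_self]
    · intro y hy; simp [eval_NSQ, hy]
    · have : MvPolynomial.eval (0 : Fin d → ℝ) (NSQ d) = 0 := by rw [eval_NSQ]; simp
      simp only [LinearMap.sub_apply, LinearMap.comp_apply, hev, map_sub, map_mul, this, map_one, sub_zero, one_mul]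
      rfl
  · intro a; simp [hev, Lop_C]
  · intro i; simp [hev, Lop_X]
  · intro i j
    have : Te.symm (Lop B (MvPolynomial.X i * MvPolynomial.X j)) = MvPolynomial.C (- B i j) := by
      rw [LinearEquiv.symm_apply_eq]
      show _ = Top' B _
      rw [Top'_apply, Lop_XX B hB.1, mul_comm (1 - NSQ d), ← MvPolynomial.smul_eq_C_mul, map_smul, map_sub, Lop_NSQ B hB]
      have : Lop B (1 : MvPolynomial (Fin d) ℝ) = 0 := by simpa using Lop_C B 1
      rw [this, zero_sub, smul_neg, neg_smul, neg_neg, MvPolynomial.smul_eq_C_mul, ← map_mul, mul_comm]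
    simp [hev, this]

/-- the Euclidean unit sphere -/
abbrev Sph (d : ℕ) := {y : Fin d → ℝ // y ⬝ᵥ y = 1}

instance (d : ℕ) : CompactSpace (Sph d) := by
  refine isCompact_iff_compactSpace.1 ((compact_D d).of_isClosed_subset
    (isClosed_eq (cont_dot d) continuous_const) fun y hy => le_of_eq hy)

/-- polynomials as continuous functions on the sphere -/
noncomputable def polyS (d : ℕ) : MvPolynomial (Fin d) ℝ →ₐ[ℝ] C(Sph d, ℝ) :=
  MvPolynomial.aeval (fun i => (⟨fun y => y.1 i, (continuous_apply i).comp continuous_subtype_val⟩ : C(Sph d, ℝ)))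

lemma polyS_apply {d : ℕ} (p : MvPolynomial (Fin d) ℝ) (y : Sph d) :
    polyS d p y = MvPolynomial.eval y.1 p := by
  induction p using MvPolynomial.induction_on with
  | C a => simp [polyS]
  | add p q hp hq => simp [hp, hq]
  | mul_X p i hp => rw [map_mul, ContinuousMap.mul_apply, hp]; simp [polyS]

lemma polyS_dense (d : ℕ) : DenseRange (polyS d) := by
  have h := ContinuousMap.subalgebra_topologicalClosure_eq_top_of_separatesPoints (polyS d).range ?_
  · intro w
    have : w ∈ (polyS d).range.topologicalClosure := by rw [h]; trivial
    exact this
  · intro x y hxy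
    have : ∃ i, x.1 i ≠ y.1 i := by
      by_contra hcon
      push Not at hcon
      exact hxy (Subtype.ext (funext hcon))
    obtain ⟨i, hi⟩ := this
    exact ⟨_, ⟨_, ⟨MvPolynomial.X i, rfl⟩, rfl⟩, by simpa [polyS] using hi⟩

lemma exists_Lam {d : ℕ} (hd : 2 ≤ d) {B : Matrix (Fin d) (Fin d) ℝ} (hB : B ∈ S1set d) :
    ∃ Lam : C(Sph d, ℝ) →L[ℝ] ℝ,
      (∀ w, |Lam w| ≤ ‖w‖) ∧
      (∀ a, Lam (polyS d (MvPolynomial.C a)) = a) ∧ (∀ i, Lam (polyS d (MvPolynomial.X i)) = 0) ∧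
      (∀ i j, Lam (polyS d (MvPolynomial.X i * MvPolynomial.X j)) = B i j) ∧
      (∀ w : (Fin d → ℝ) → ℝ, VisSub B w → ContinuousOn w {y | y ⬝ᵥ y ≤ 1} →
        ∀ W : C(Sph d, ℝ), (∀ y, W y = w y.1) → w 0 ≤ Lam W) := by
  obtain ⟨lam, h1, hC, hX, hXX⟩ := exists_lam hd hB
  have hup : ∀ p, lam p ≤ ‖polyS d p‖ := by
    intro p
    obtain ⟨h, hh, hs, h0⟩ := h1 p
    rw [← h0]
    refine poly_max hB h hh _ (fun y hy => ?_) 0 (by simp)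
    rw [hs y hy, ← polyS_apply p ⟨y, hy⟩]
    exact (le_abs_self _).trans ((polyS d p).norm_coe_le_norm ⟨y, hy⟩)
  have hbd : ∀ p, ‖lam p‖ ≤ 1 * ‖(polyS d).toLinearMap p‖ := by
    intro p
    rw [Real.norm_eq_abs, abs_le, one_mul]
    have a := hup p
    have b := hup (-p)
    rw [map_neg, map_neg, norm_neg] at b
    exact ⟨by simpa using neg_le.1 b, a⟩
  have hdense : DenseRange (polyS d).toLinearMap := polyS_dense d
  have hext : ∀ p, lam.extendOfNorm (polyS d).toLinearMap (polyS d p) = lam p :=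
    fun p => LinearMap.extendOfNorm_eq hdense ⟨1, hbd⟩ p
  have hnorm : ∀ w, |lam.extendOfNorm (polyS d).toLinearMap w| ≤ ‖w‖ := by
    intro w
    simpa using LinearMap.norm_extendOfNorm_apply_le hdense 1 hbd w
  refine ⟨lam.extendOfNorm (polyS d).toLinearMap, hnorm, fun a => by rw [hext, hC], fun i => by rw [hext, hX],
    fun i j => by rw [hext, hXX], ?_⟩
  intro w hw hwc W hW
  refine le_of_forall_pos_le_add fun ε hε => ?_
  obtain ⟨p, hp⟩ := Metric.denseRange_iff.1 (polyS_dense d) W (ε/2) (by positivity)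
  obtain ⟨h, hh, hs, h0⟩ := h1 (p + MvPolynomial.C (ε/2))
  have hc := vsub_comp hB hw hwc h hh (fun y hy => ?_) 0 (by simp)
  · rw [h0, map_add, hC, ← hext] at hc
    have := hnorm (W - polyS d p)
    rw [map_sub] at this
    have h2 := (abs_le.1 this).1
    rw [dist_eq_norm] at hp
    linarith
  · rw [hs y hy, map_add, MvPolynomial.eval_C, ← polyS_apply p ⟨y, hy⟩, ← hW ⟨y, hy⟩]
    have h3 := (W - polyS d p).norm_coe_le_norm ⟨y, hy⟩
    rw [dist_eq_norm] at hp
    have h4 := (le_abs_self _).trans (h3.trans hp.le)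
    simp only [ContinuousMap.sub_apply] at h4
    linarith


/-! ### Mean value inequality -/

/-- affine substitution -/
noncomputable def affP {d : ℕ} (x : Fin d → ℝ) (r : ℝ) :
    MvPolynomial (Fin d) ℝ →ₐ[ℝ] MvPolynomial (Fin d) ℝ :=
  MvPolynomial.aeval (fun i => MvPolynomial.C r⁻¹ * (MvPolynomial.X i - MvPolynomial.C (x i)))

lemma affP_eval {d : ℕ} (x : Fin d → ℝ) (r : ℝ) (p : MvPolynomial (Fin d) ℝ) (z : Fin d → ℝ) :
    MvPolynomial.eval z (affP x r p) = MvPolynomial.eval (r⁻¹ • (z - x)) p := by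
  induction p using MvPolynomial.induction_on with
  | C a => simp [affP]
  | add p q hp hq => simp [hp, hq]
  | mul_X p i hp => rw [map_mul, map_mul, hp]; simp [affP]

lemma affP_pderiv {d : ℕ} (x : Fin d → ℝ) (r : ℝ) (p : MvPolynomial (Fin d) ℝ) (j : Fin d) :
    MvPolynomial.pderiv j (affP x r p) = MvPolynomial.C r⁻¹ * affP x r (MvPolynomial.pderiv j p) := by
  induction p using MvPolynomial.induction_on with
  | C a => simp [affP]
  | add p q hp hq => simp [hp, hq, mul_add]
  | mul_X p i hp =>
    rw [map_mul, MvPolynomial.pderiv_mul, MvPolynomial.pderiv_mul, hp, map_add, map_mul, map_mul]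
    have : affP x r (MvPolynomial.X i) = MvPolynomial.C r⁻¹ * (MvPolynomial.X i - MvPolynomial.C (x i)) := by
      simp [affP]
    rw [this]
    by_cases h : i = j
    · subst h; simp; ring
    · simp [h]; ring

lemma affP_Lop {d : ℕ} (B : Matrix (Fin d) (Fin d) ℝ) (x : Fin d → ℝ) (r : ℝ) (p : MvPolynomial (Fin d) ℝ) :
    Lop B (affP x r p) = (r⁻¹ ^ 2) • affP x r (Lop B p) := by
  simp only [Lop_apply, map_sum, map_smul, Finset.smul_sum, affP_pderiv, MvPolynomial.pderiv_C_mul]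
  refine Finset.sum_congr rfl fun i _ => Finset.sum_congr rfl fun j _ => ?_
  simp only [MvPolynomial.smul_eq_C_mul, map_pow]
  ring

lemma mean_value {d : ℕ} {B : Matrix (Fin d) (Fin d) ℝ} (hB : B ∈ S1set d)
    (Lam : C(Sph d, ℝ) →L[ℝ] ℝ)
    (hXX : ∀ i j, Lam (polyS d (MvPolynomial.X i * MvPolynomial.X j)) = B i j)
    (hLam : ∀ w : (Fin d → ℝ) → ℝ, VisSub B w → ContinuousOn w {y | y ⬝ᵥ y ≤ 1} →
        ∀ W : C(Sph d, ℝ), (∀ y, W y = w y.1) → w 0 ≤ Lam W)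
    (V : Set (Fin d → ℝ)) (U : (Fin d → ℝ) → ℝ) (hU : Continuous U) (c : ℝ)
    (hsub : ∀ q : MvPolynomial (Fin d) ℝ, ∀ z ∈ V,
      IsLocalMax (fun y => U y - MvPolynomial.eval y q) z → c ≤ MvPolynomial.eval z (Lop B q))
    (x : Fin d → ℝ) (r : ℝ) (hr : 0 < r) (hV : ∀ y, y ⬝ᵥ y ≤ 1 → x + r • y ∈ V)
    (W : C(Sph d, ℝ)) (hW : ∀ y, W y = U (x + r • y.1)) :
    U x + c * r ^ 2 / 2 ≤ Lam W := by
  have hr0 : r ≠ 0 := hr.ne'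
  set k := c * r ^ 2 / 2 with hk
  have h1 := hLam (fun y => U (x + r • y) - k * (y ⬝ᵥ y)) ?_ ?_ (W - k • polyS d (NSQ d)) ?_
  · have hN : Lam (polyS d (NSQ d)) = 1 := by
      rw [NSQ, map_sum, map_sum, Finset.sum_congr rfl fun i _ => hXX i i]
      exact hB.2
    rw [map_sub, map_smul, hN] at h1
    simp at h1
    linarith
  · intro q y hy hmax
    have h2 := hsub (affP x r (q + k • NSQ d)) (x + r • y) (hV y hy.le) ?_
    · rw [affP_Lop, map_add (Lop B), LinearMap.map_smul, Lop_NSQ B hB, MvPolynomial.smul_eval, affP_eval] at h2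
      have e : r⁻¹ • (x + r • y - x) = y := by
        rw [add_sub_cancel_left, smul_smul, inv_mul_cancel₀ hr0, one_smul]
      rw [e] at h2
      simp [MvPolynomial.smul_eval] at h2
      have h3 : r ^ 2 * c ≤ r ^ 2 * ((r ^ 2)⁻¹ * ((MvPolynomial.eval y) (Lop B q) + k * 2)) :=
        mul_le_mul_of_nonneg_left h2 (by positivity)
      rw [mul_inv_cancel_left₀ (by positivity)] at h3
      linarith
    · have hc : Tendsto (fun z => r⁻¹ • (z - x)) (𝓝 (x + r • y)) (𝓝 y) := by
        have : Continuous (fun z : Fin d → ℝ => r⁻¹ • (z - x)) := by fun_prop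
        have h := this.tendsto (x + r • y)
        rwa [add_sub_cancel_left, smul_smul, inv_mul_cancel₀ hr0, one_smul] at h
      have h3 := hc.eventually hmax
      refine h3.mono fun z hz => ?_
      have e : ∀ z, x + r • (r⁻¹ • (z - x)) = z := by
        intro z; rw [smul_smul, mul_inv_cancel₀ hr0, one_smul]; abel
      have e2 : r⁻¹ • (x + r • y - x) = y := by
        rw [add_sub_cancel_left, smul_smul, inv_mul_cancel₀ hr0, one_smul]
      simp only [affP_eval, map_add, MvPolynomial.smul_eval, eval_NSQ, e2]
      beta_reduce at hz
      rw [e] at hz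
      linarith
  · have := cont_dot d
    exact Continuous.continuousOn (by fun_prop)
  · intro y
    simp [hW, polyS_apply, eval_NSQ]

lemma mollify_sub {d : ℕ} (hd : 2 ≤ d) {B : Matrix (Fin d) (Fin d) ℝ} (hB : B ∈ S1set d)
    (V : Set (Fin d → ℝ)) (U : (Fin d → ℝ) → ℝ) (hU : Continuous U) (c : ℝ)
    (hsub : ∀ q : MvPolynomial (Fin d) ℝ, ∀ z ∈ V,
      IsLocalMax (fun y => U y - MvPolynomial.eval y q) z → c ≤ MvPolynomial.eval z (Lop B q))
    (ρ : (Fin d → ℝ) → ℝ) (hρc : Continuous ρ) (hρs : HasCompactSupport ρ) (hρ0 : ∀ t, 0 ≤ ρ t)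
    (hρ1 : ∫ t, ρ t = 1) (φ : (Fin d → ℝ) → ℝ) (hφ : ContDiff ℝ 2 φ)
    (hφe : ∀ x, φ x = ∫ t, ρ t * U (x - t))
    (x : Fin d → ℝ) (r0 : ℝ) (hr0 : 0 < r0)
    (hV : ∀ t, ρ t ≠ 0 → ∀ y, ‖y‖ ≤ r0 → x - t + y ∈ V) :
    c ≤ trH d B φ x := by
  obtain ⟨Lam, hnorm, hC, hX, hXX, hLam⟩ := exists_Lam hd hB
  have hDn : ∀ y : Fin d → ℝ, y ⬝ᵥ y ≤ 1 → ‖y‖ ≤ 1 := by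
    intro y hy
    have h := (norm_sq_le_dot y).trans hy
    nlinarith [norm_nonneg y]
  -- mean value inequality for the mollification
  have hmv : ∀ r, 0 < r → r ≤ r0 → ∀ W : C(Sph d, ℝ), (∀ y, W y = φ (x + r • y.1)) →
      φ x + c * r ^ 2 / 2 ≤ Lam W := by
    intro r hr hrr W hW
    let G : C((Fin d → ℝ) × Sph d, ℝ) := ⟨fun p => U (x - p.1 + r • p.2.1), by
      have h2 : Continuous (fun p : (Fin d → ℝ) × Sph d => p.2.1) := continuous_subtype_val.comp continuous_snd
      fun_prop⟩
    let F : C(Fin d → ℝ, C(Sph d, ℝ)) := G.curry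
    have hint : MeasureTheory.Integrable (fun t => ρ t • F t) := by
      refine Continuous.integrable_of_hasCompactSupport (hρc.smul F.continuous) hρs.smul_right
    have hWF : W = ∫ t, ρ t • F t := by
      ext y
      have := ContinuousLinearMap.integral_comp_comm (ContinuousMap.evalCLM ℝ y) hint
      rw [hW, hφe]
      have h2 : (ContinuousMap.evalCLM ℝ y) (∫ t, ρ t • F t) = (∫ t, ρ t • F t) y := rfl
      rw [← h2, ← this]
      congr 1
      ext t
      show ρ t * U (x + r • y.1 - t) = ρ t * U (x - t + r • y.1)
      congr 2; abel
    rw [hWF, ← ContinuousLinearMap.integral_comp_comm Lam hint]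
    have hi1 : MeasureTheory.Integrable (fun t => ρ t * U (x - t)) := by
      refine Continuous.integrable_of_hasCompactSupport (by fun_prop) hρs.mul_right
    have hi2 : MeasureTheory.Integrable (fun t => ρ t * (c * r ^ 2 / 2)) := by
      refine Continuous.integrable_of_hasCompactSupport (by fun_prop) hρs.mul_right
    have e : φ x + c * r ^ 2 / 2 = ∫ t, (ρ t * U (x - t) + ρ t * (c * r ^ 2 / 2)) := by
      rw [MeasureTheory.integral_add hi1 hi2, ← hφe, MeasureTheory.integral_mul_const, hρ1, one_mul]
    rw [e]
    refine MeasureTheory.integral_mono (hi1.add hi2) (Lam.integrable_comp hint) fun t => ?_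
    simp only [map_smul, smul_eq_mul]
    rw [← mul_add]
    by_cases ht : ρ t = 0
    · simp [ht]
    refine mul_le_mul_of_nonneg_left ?_ (hρ0 t)
    refine mean_value hB Lam hXX hLam V U hU c hsub (x - t) r hr (fun y hy => hV t ht _ ?_) (F t) (fun y => rfl)
    rw [norm_smul, Real.norm_of_nonneg hr.le]
    have := hDn y hy
    nlinarith [norm_nonneg y]
  refine le_of_forall_pos_le_add fun ε hε => ?_
  obtain ⟨δ, hδ, hT⟩ := aux_taylor φ hφ x (ε / 2) (by positivity)
  obtain ⟨r, hr, hr1⟩ : ∃ r, 0 < r ∧ r ≤ r0 ∧ r < δ := ⟨min r0 (δ/2), by positivity, min_le_left _ _,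
    lt_of_le_of_lt (min_le_right _ _) (by linarith)⟩
  let W : C(Sph d, ℝ) := ⟨fun y => φ (x + r • y.1), by
    have h2 : Continuous (fun p : Sph d => p.1) := continuous_subtype_val
    have := hφ.continuous
    fun_prop⟩
  have h1 := hmv r hr hr1.1 W (fun y => rfl)
  set g : Fin d → ℝ := fun i => fderiv ℝ φ x (Pi.single i 1) with hg
  set P : MvPolynomial (Fin d) ℝ := MvPolynomial.C (φ x) + ∑ i, (r * g i) • MvPolynomial.X i +
    ∑ i, ∑ j, (r ^ 2 / 2 * hessianM d φ x j i) • (MvPolynomial.X i * MvPolynomial.X j) with hP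
  have hLP : Lam (polyS d P) = φ x + r ^ 2 / 2 * trH d B φ x := by
    rw [trH_eq]
    simp only [hP, map_add, map_sum, map_smul, hC, hX, hXX, smul_eq_mul, Finset.mul_sum, mul_zero,
      Finset.sum_const_zero, add_zero]
    congr 1
    refine Finset.sum_congr rfl fun i _ => Finset.sum_congr rfl fun j _ => ?_
    ring
  have hgl : ∀ y : Fin d → ℝ, fderiv ℝ φ x y = ∑ i, g i * y i := by
    intro y
    conv_lhs => rw [pi_eq_sum_univ' y]
    simp [hg, mul_comm]
  have hPe : ∀ y, MvPolynomial.eval y P = φ x + fderiv ℝ φ x (r • y) + 1/2 * fderiv ℝ (fderiv ℝ φ) x (r • y) (r • y) := by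
    intro y
    rw [hessianM_bilin, hgl]
    simp only [hP, map_add, map_sum, MvPolynomial.smul_eval, MvPolynomial.eval_C, MvPolynomial.eval_X, map_mul,
      Finset.mul_sum, Pi.smul_apply, smul_eq_mul]
    rw [Finset.sum_comm]
    congr 1
    · congr 1
      refine Finset.sum_congr rfl fun i _ => ?_
      ring
    · refine Finset.sum_congr rfl fun i _ => Finset.sum_congr rfl fun j _ => ?_
      ring
  have hR : ‖W - polyS d P‖ ≤ ε / 2 * r ^ 2 := by
    rw [ContinuousMap.norm_le _ (by positivity)]
    intro y
    have hy1 := hDn y.1 y.2.le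
    have hny : ‖r • y.1‖ ≤ r := by
      rw [norm_smul, Real.norm_of_nonneg hr.le]; nlinarith
    have h2 := hT (r • y.1) (by linarith)
    rw [ContinuousMap.sub_apply, polyS_apply, hPe, Real.norm_eq_abs]
    have h3 : W y = φ (x + r • y.1) := rfl
    rw [h3]
    refine le_trans (le_of_eq ?_) (h2.trans (by gcongr))
    congr 1; ring
  have h2 := (hnorm (W - polyS d P)).trans hR
  rw [map_sub, hLP] at h2
  have h3 := (abs_le.1 h2).2
  have h4 : r ^ 2 / 2 * c ≤ r ^ 2 / 2 * (trH d B φ x + ε) := by nlinarith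
  exact le_of_mul_le_mul_left h4 (by positivity)


/-! ### Convexity of subsolutions -/

lemma rank_one_mem {d : ℕ} (e : Fin d → ℝ) (he : 0 < e ⬝ᵥ e) :
    (e ⬝ᵥ e)⁻¹ • vecMulVec e e ∈ S1set d := by
  refine ⟨?_, ?_⟩
  · have h : (vecMulVec e e).PosSemidef := by
      simpa using Matrix.posSemidef_vecMulVec_self_star e
    exact h.smul (inv_nonneg.2 he.le)
  · rw [Matrix.trace_smul, Matrix.trace_vecMulVec, smul_eq_mul, inv_mul_cancel₀ he.ne']

/-- directional derivative -/
noncomputable def Dir {d : ℕ} (e : Fin d → ℝ) : Derivation ℝ (MvPolynomial (Fin d) ℝ) (MvPolynomial (Fin d) ℝ) :=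
  MvPolynomial.mkDerivation ℝ (fun i => MvPolynomial.C (e i))

lemma Dir_apply {d : ℕ} (e : Fin d → ℝ) (p : MvPolynomial (Fin d) ℝ) :
    Dir e p = ∑ i, e i • MvPolynomial.pderiv i p := by
  induction p using MvPolynomial.induction_on with
  | C a => simp [Dir]
  | add p q hp hq => simp [hp, hq, Finset.sum_add_distrib]
  | mul_X p j hp =>
    rw [Derivation.leibniz, hp]
    simp only [MvPolynomial.pderiv_mul, smul_add, Finset.sum_add_distrib, MvPolynomial.pderiv_X, Dir,
      MvPolynomial.mkDerivation_X, smul_eq_mul, Pi.single_apply, MvPolynomial.smul_eq_C_mul]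
    simp [Finset.mul_sum]
    rw [add_comm]
    congr 1
    · exact Finset.sum_congr rfl fun i _ => by ring
    · ring

lemma Lop_rank_one {d : ℕ} (e : Fin d → ℝ) (c : ℝ) (p : MvPolynomial (Fin d) ℝ) :
    Lop (c • vecMulVec e e) p = c • Dir e (Dir e p) := by
  rw [Lop_apply, Dir_apply, Dir_apply]
  simp only [Finset.smul_sum, map_sum, Derivation.map_smul, smul_smul, Matrix.smul_apply, vecMulVec_apply, smul_eq_mul]
  rw [Finset.sum_comm]
  exact Finset.sum_congr rfl fun i _ => Finset.sum_congr rfl fun j _ => by rw [mul_comm (e j)]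

lemma segment_ineq {d : ℕ} (V : Set (Fin d → ℝ)) (hVo : IsOpen V) (u : (Fin d → ℝ) → ℝ)
    (husc : UpperSemicontinuousOn u V)
    (hsub : ∀ q : MvPolynomial (Fin d) ℝ, ∀ z ∈ V, IsLocalMax (fun y => u y - MvPolynomial.eval y q) z →
      ∀ B ∈ S1set d, 0 ≤ MvPolynomial.eval z (Lop B q))
    (a b : Fin d → ℝ) (hab : a ≠ b) (hseg : segment ℝ a b ⊆ V) (t : ℝ) (ht0 : 0 ≤ t) (ht1 : t ≤ 1)
    (ε : ℝ) (hε : 0 < ε) :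
    u (a + t • (b - a)) ≤ u a + t * (u b - u a) + 2 * ε := by
  set e := b - a with he
  have he0 : e ≠ 0 := sub_ne_zero.2 hab.symm
  have hee : 0 < e ⬝ᵥ e := by
    rcases (Finset.sum_nonneg fun i _ => mul_self_nonneg (e i) : 0 ≤ e ⬝ᵥ e).lt_or_eq with h | h
    · exact h
    · exact absurd (dotProduct_self_eq_zero.1 h.symm) he0
  have hVa : a ∈ V := hseg (left_mem_segment ℝ a b)
  have hVb : b ∈ V := hseg (right_mem_segment ℝ a b)
  let s : (Fin d → ℝ) → ℝ := fun y => (e ⬝ᵥ e)⁻¹ * ((y - a) ⬝ᵥ e)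
  let w : (Fin d → ℝ) → (Fin d → ℝ) := fun y => y - a - s y • e
  have hsc : Continuous s := by
    simp only [s, dotProduct, Pi.sub_apply]; fun_prop
  have hwc : Continuous w := by simp only [w]; fun_prop
  have hwwc : Continuous (fun y => w y ⬝ᵥ w y) := (cont_dot d).comp hwc
  have hdec : ∀ y, y = a + s y • e + w y := by intro y; simp only [w]; abel
  have hs_seg : ∀ τ : ℝ, s (a + τ • e) = τ := by
    intro τ; simp only [s, add_sub_cancel_left, smul_dotProduct, smul_eq_mul]
    field_simp
  have hw_seg : ∀ τ : ℝ, w (a + τ • e) = 0 := by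
    intro τ; simp only [w, hs_seg]; simp
  -- polynomials
  let sP : MvPolynomial (Fin d) ℝ :=
    (e ⬝ᵥ e)⁻¹ • ∑ i, e i • (MvPolynomial.X i - MvPolynomial.C (a i))
  let wP : Fin d → MvPolynomial (Fin d) ℝ := fun i =>
    MvPolynomial.X i - MvPolynomial.C (a i) - e i • sP
  have hsPe : ∀ y, MvPolynomial.eval y sP = s y := by
    intro y
    simp only [sP, s, MvPolynomial.smul_eval, map_sum, dotProduct, map_sub, MvPolynomial.eval_X, MvPolynomial.eval_C, Pi.sub_apply]
    congr 1
    exact Finset.sum_congr rfl fun i _ => mul_comm _ _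
  have hwPe : ∀ y i, MvPolynomial.eval y (wP i) = w y i := by
    intro y i
    simp only [wP, w, MvPolynomial.smul_eval, map_sub, MvPolynomial.eval_X, MvPolynomial.eval_C, Pi.sub_apply,
      hsPe, Pi.smul_apply, smul_eq_mul]
    ring
  have hDX : ∀ i, Dir e (MvPolynomial.X i) = MvPolynomial.C (e i) := by
    intro i; simp [Dir]
  have hDC : ∀ r, Dir e (MvPolynomial.C r) = 0 := by
    intro i; simp [Dir]
  have hDs : Dir e sP = 1 := by
    simp only [sP, Derivation.map_smul, map_sum, map_sub, hDX, hDC, sub_zero]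
    have : ∑ i, e i • (MvPolynomial.C (e i) : MvPolynomial (Fin d) ℝ) = MvPolynomial.C (e ⬝ᵥ e) := by
      simp [dotProduct, MvPolynomial.smul_eq_C_mul]
    rw [this, MvPolynomial.smul_eq_C_mul, ← map_mul, inv_mul_cancel₀ hee.ne', map_one]
  have hDw : ∀ i, Dir e (wP i) = 0 := by
    intro i
    simp only [wP, Derivation.map_smul, map_sub, hDX, hDC, sub_zero, hDs]
    simp [MvPolynomial.smul_eq_C_mul]
  -- radii
  have hsegc : IsCompact (segment ℝ a b) := by
    rw [segment_eq_image']
    exact isCompact_Icc.image (by fun_prop)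
  obtain ⟨δ, hδ, hδV⟩ := hsegc.exists_cthickening_subset_open hVo hseg
  have hua : ∀ᶠ y in 𝓝 a, u y < u a + ε := by
    have := husc a hVa (u a + ε) (by linarith)
    rwa [hVo.nhdsWithin_eq hVa] at this
  have hub : ∀ᶠ y in 𝓝 b, u y < u b + ε := by
    have := husc b hVb (u b + ε) (by linarith)
    rwa [hVo.nhdsWithin_eq hVb] at this
  obtain ⟨δa, hδa, hδa'⟩ := Metric.eventually_nhds_iff.1 hua
  obtain ⟨δb, hδb, hδb'⟩ := Metric.eventually_nhds_iff.1 hub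
  set ρ := min δ (min δa δb) / 2 with hρ
  have hρ0 : 0 < ρ := by positivity
  have hρ1 : ρ < δ := by
    have := min_le_left δ (min δa δb)
    have : 0 < min δ (min δa δb) := by positivity
    linarith
  have hρa : ρ < δa := by
    have := (min_le_right δ (min δa δb)).trans (min_le_left _ _)
    have : 0 < min δ (min δa δb) := by positivity
    linarith
  have hρb : ρ < δb := by
    have := (min_le_right δ (min δa δb)).trans (min_le_right _ _)
    have : 0 < min δ (min δa δb) := by positivity
    linarith
  have hwn : ∀ y, w y ⬝ᵥ w y ≤ ρ ^ 2 → ‖w y‖ ≤ ρ := by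
    intro y hy
    exact abs_le_of_sq_le_sq' ((norm_sq_le_dot _).trans hy) hρ0.le |>.2
  let Cy : Set (Fin d → ℝ) := {y | 0 ≤ s y ∧ s y ≤ 1 ∧ w y ⬝ᵥ w y ≤ ρ ^ 2}
  have hCdist : ∀ y ∈ Cy, dist y (a + s y • e) ≤ ρ := by
    rintro y ⟨-, -, h3⟩
    rw [dist_eq_norm]
    have : y - (a + s y • e) = w y := by simp only [w]; abel
    rw [this]; exact hwn y h3
  have hCseg : ∀ y ∈ Cy, a + s y • e ∈ segment ℝ a b := by
    rintro y ⟨h1, h2, -⟩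
    rw [segment_eq_image']
    exact ⟨s y, ⟨h1, h2⟩, rfl⟩
  have hCV : Cy ⊆ V := by
    intro y hy
    exact hδV (Metric.mem_cthickening_of_dist_le y _ δ _ (hCseg y hy) ((hCdist y hy).trans hρ1.le))
  have hCclosed : IsClosed Cy := by
    exact (isClosed_le continuous_const hsc).inter ((isClosed_le hsc continuous_const).inter
      (isClosed_le hwwc continuous_const))
  have hCcpt : IsCompact Cy := by
    refine Metric.isCompact_of_isClosed_isBounded hCclosed ?_
    refine (hsegc.isBounded.cthickening (δ := ρ)).subset fun y hy => ?_
    exact Metric.mem_cthickening_of_dist_le y _ ρ _ (hCseg y hy) (hCdist y hy)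
  have hmem : a + t • e ∈ Cy := by
    refine ⟨?_, ?_, ?_⟩
    · rw [hs_seg]; exact ht0
    · rw [hs_seg]; exact ht1
    · rw [hw_seg]; simp; positivity
  obtain ⟨y1, hy1, hM⟩ := (husc.mono hCV).exists_isMaxOn ⟨_, hmem⟩ hCcpt
  set K := (|u y1| + |u a| + |u b|) / ρ ^ 2 with hK
  have hK0 : 0 ≤ K := by positivity
  have hKρ : K * ρ ^ 2 = |u y1| + |u a| + |u b| := by rw [hK]; field_simp
  let q : MvPolynomial (Fin d) ℝ := MvPolynomial.C (u a + ε) + (u b - u a) • sP + ε • (sP * (1 - sP))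
    + K • ∑ i, wP i * wP i
  have hqe : ∀ y, MvPolynomial.eval y q = u a + ε + (u b - u a) * s y + ε * (s y * (1 - s y))
      + K * (w y ⬝ᵥ w y) := by
    intro y
    simp [q, MvPolynomial.smul_eval, hsPe, hwPe, dotProduct]
  have hDDq : Dir e (Dir e q) = MvPolynomial.C (- (2 * ε)) := by
    simp only [q, map_add, Derivation.map_smul, map_sum, Derivation.leibniz, hDs, hDw, hDC, smul_zero, map_sub,
      Derivation.map_one_eq_zero, smul_eq_mul, mul_one, mul_zero, Finset.sum_const_zero, add_zero, zero_add, zero_sub, mul_neg]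
    have hC2 : (MvPolynomial.C 2 : MvPolynomial (Fin d) ℝ) = 2 := map_ofNat _ 2
    simp [MvPolynomial.smul_eq_C_mul, hDs, hC2]
    ring
  have hqc : Continuous (fun y => MvPolynomial.eval y q) := poly_cont q
  have husq : UpperSemicontinuousOn (fun y => u y + -(MvPolynomial.eval y q)) Cy :=
    (husc.mono hCV).add (hqc.neg.continuousOn.upperSemicontinuousOn)
  obtain ⟨y0, hy0, hmax⟩ := husq.exists_isMaxOn ⟨_, hmem⟩ hCcpt
  have key : u y0 ≤ MvPolynomial.eval y0 q := by
    obtain ⟨g1, g2, g3⟩ := hy0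
    have hww : 0 ≤ w y0 ⬝ᵥ w y0 := Finset.sum_nonneg fun i _ => mul_self_nonneg (w y0 i)
    have hKw : 0 ≤ K * (w y0 ⬝ᵥ w y0) := mul_nonneg hK0 hww
    rw [hqe]
    rcases g1.eq_or_lt with h | h
    · have := hδa' (y := y0) (by
        have := hCdist y0 ⟨g1, g2, g3⟩
        rw [← h] at this; simp at this; linarith)
      rw [← h]; nlinarith
    rcases g2.eq_or_lt with h' | h'
    · have := hδb' (y := y0) (by
        have := hCdist y0 ⟨g1, g2, g3⟩
        rw [h'] at this; simp [he] at this; linarith)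
      rw [h']; nlinarith
    have hss : 0 ≤ ε * (s y0 * (1 - s y0)) := by
      have : 0 ≤ 1 - s y0 := by linarith
      positivity
    rcases g3.eq_or_lt with h'' | h''
    · rw [h'', hKρ]
      have h1 := hM ⟨g1, g2, g3⟩
      have h1 : u y0 ≤ u y1 := h1
      have := le_abs_self (u y1)
      have h4 := neg_abs_le (u a)
      have h5 := neg_abs_le (u b)
      have h6 : 0 ≤ (1 - s y0) * (u a + |u a|) := mul_nonneg (by linarith) (by linarith)
      have h7 : 0 ≤ s y0 * (u b + |u b|) := mul_nonneg (by linarith) (by linarith)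
      have h8 : 0 ≤ s y0 * |u a| := by positivity
      have h9 : 0 ≤ (1 - s y0) * |u b| := mul_nonneg (by linarith) (by positivity)
      nlinarith
    · exfalso
      have hnb : Cy ∈ 𝓝 y0 := by
        have o1 := (isOpen_lt continuous_const hsc).mem_nhds h
        have o2 := (isOpen_lt hsc continuous_const).mem_nhds h'
        have o3 := (isOpen_lt hwwc continuous_const).mem_nhds h''
        filter_upwards [o1, o2, o3] with y p1 p2 p3
        exact ⟨le_of_lt p1, le_of_lt p2, le_of_lt p3⟩
      have hl := hmax.isLocalMax hnb
      have := hsub q y0 (hCV ⟨g1, g2, g3⟩) (by simpa [sub_eq_add_neg] using hl) _ (rank_one_mem e hee)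
      rw [Lop_rank_one, hDDq, MvPolynomial.smul_eval, MvPolynomial.eval_C] at this
      have : 0 < (e ⬝ᵥ e)⁻¹ * (2 * ε) := by positivity
      linarith
  have h1 : u (a + t • e) + -(MvPolynomial.eval (a + t • e) q) ≤ u y0 + -(MvPolynomial.eval y0 q) := hmax hmem
  rw [hqe (a + t • e), hs_seg, hw_seg] at h1
  simp at h1
  have h2 : ε * (t * (1 - t)) ≤ ε := mul_le_of_le_one_right hε.le (by nlinarith)
  linarith

lemma convex_of_sub {d : ℕ} (V : Set (Fin d → ℝ)) (hVo : IsOpen V) (hVc : Convex ℝ V) (u : (Fin d → ℝ) → ℝ)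
    (husc : UpperSemicontinuousOn u V)
    (hsub : ∀ q : MvPolynomial (Fin d) ℝ, ∀ z ∈ V, IsLocalMax (fun y => u y - MvPolynomial.eval y q) z →
      ∀ B ∈ S1set d, 0 ≤ MvPolynomial.eval z (Lop B q)) : ConvexOn ℝ V u := by
  refine ⟨hVc, fun x hx y hy a b ha hb hab => ?_⟩
  by_cases hxy : x = y
  · subst hxy
    rw [← add_smul, hab, one_smul, ← add_smul, hab, one_smul]
  refine le_of_forall_pos_le_add fun ε hε => ?_
  have := segment_ineq V hVo u husc hsub x y hxy (hVc.segment_subset hx hy) b hb (by linarith) (ε / 2) (by linarith)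
  have e : x + b • (y - x) = a • x + b • y := by
    rw [show a = 1 - b by linarith]; module
  rw [e] at this
  rw [show a = 1 - b by linarith] at this ⊢
  simp only [smul_eq_mul]
  linarith

lemma continuous_of_sub {d : ℕ} (V : Set (Fin d → ℝ)) (hVo : IsOpen V) (hVc : Convex ℝ V) (u : (Fin d → ℝ) → ℝ)
    (husc : UpperSemicontinuousOn u V)
    (hsub : ∀ q : MvPolynomial (Fin d) ℝ, ∀ z ∈ V, IsLocalMax (fun y => u y - MvPolynomial.eval y q) z →
      ∀ B ∈ S1set d, 0 ≤ MvPolynomial.eval z (Lop B q)) : ContinuousOn u V :=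
  (convex_of_sub V hVo hVc u husc hsub).continuousOn hVo


/-! ### Matrix facts -/

lemma S1_det {d : ℕ} {B : Matrix (Fin d) (Fin d) ℝ} (hB : B ∈ S1set d) : 0 ≤ B.det ∧ B.det ≤ 1 := by
  obtain ⟨hP, hT⟩ := hB
  have hH := hP.isHermitian
  have hn : ∀ i, 0 ≤ hH.eigenvalues i := hP.eigenvalues_nonneg
  have hs : ∑ i, hH.eigenvalues i = 1 := by
    have := hH.trace_eq_sum_eigenvalues
    rw [hT] at this
    simpa using this.symm
  have hd := hH.det_eq_prod_eigenvalues
  simp at hd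
  rw [hd]
  refine ⟨Finset.prod_nonneg fun i _ => hn i, Finset.prod_le_one (fun i _ => hn i) fun i _ => ?_⟩
  rw [← hs]
  exact Finset.single_le_sum (fun i _ => hn i) (Finset.mem_univ i)

lemma S1_rpow {d : ℕ} {B : Matrix (Fin d) (Fin d) ℝ} (hB : B ∈ S1set d) :
    0 ≤ B.det ^ ((1 : ℝ) / d) ∧ B.det ^ ((1 : ℝ) / d) ≤ 1 := by
  obtain ⟨h0, h1⟩ := S1_det hB
  exact ⟨Real.rpow_nonneg h0 _, Real.rpow_le_one h0 h1 (by positivity)⟩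

lemma S1_entry {d : ℕ} {B : Matrix (Fin d) (Fin d) ℝ} (hB : B ∈ S1set d) (i j : Fin d) : |B i j| ≤ 1 := by
  obtain ⟨hP, hT⟩ := hB
  have hsym : B j i = B i j := by
    have := hP.isHermitian.apply i j
    simpa using this
  have hdiag : ∀ i, 0 ≤ B i i := fun i => hP.diag_nonneg
  have hle : ∀ i, B i i ≤ 1 := fun i => by
    rw [← hT]
    exact Finset.single_le_sum (f := fun i => B i i) (fun i _ => hdiag i) (Finset.mem_univ i)
  have hq : ∀ c : ℝ, 0 ≤ B i i + c * (2 * B i j) + c ^ 2 * B j j := by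
    intro c
    have h := hP.dotProduct_mulVec_nonneg (Pi.single i 1 + c • Pi.single j 1)
    simp [Matrix.mulVec_add, Matrix.mulVec_smul, add_dotProduct, dotProduct_add, hsym] at h
    nlinarith
  have h1 := hq 1
  have h2 := hq (-1)
  rw [abs_le]
  constructor <;> nlinarith [hle i, hle j]

lemma S1_nonempty {d : ℕ} (hd : 2 ≤ d) : (S1set d).Nonempty := by
  have : 0 < (Pi.single (⟨0, by omega⟩ : Fin d) (1 : ℝ)) ⬝ᵥ (Pi.single (⟨0, by omega⟩ : Fin d) (1 : ℝ)) := by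
    simp
  exact ⟨_, rank_one_mem _ this⟩

lemma bval_le_bellman {d : ℕ} (A : Matrix (Fin d) (Fin d) ℝ) (f : ℝ)
    {B : Matrix (Fin d) (Fin d) ℝ} (hB : B ∈ S1set d) : bval d A B f ≤ bellman d A f := by
  refine le_csSup ⟨(∑ i, ∑ j, |A j i|) + |f|, ?_⟩ ⟨B, hB, rfl⟩
  rintro _ ⟨B, hB, rfl⟩
  simp only [bval]
  refine add_le_add ?_ ?_
  · simp only [Matrix.trace, Matrix.diag, Matrix.mul_apply]
    refine (neg_le_abs _).trans ((Finset.abs_sum_le_sum_abs _ _).trans (Finset.sum_le_sum fun i _ => ?_))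
    refine (Finset.abs_sum_le_sum_abs _ _).trans (Finset.sum_le_sum fun j _ => ?_)
    rw [abs_mul]
    have := S1_entry hB i j
    have := abs_nonneg (A j i)
    nlinarith
  · obtain ⟨h0, h1⟩ := S1_rpow hB
    refine (le_abs_self _).trans ?_
    rw [abs_mul, abs_of_nonneg h0]
    exact mul_le_of_le_one_right (abs_nonneg f) h1

lemma bellman_le {d : ℕ} (hd : 2 ≤ d) (A : Matrix (Fin d) (Fin d) ℝ) (f c : ℝ)
    (h : ∀ B ∈ S1set d, bval d A B f ≤ c) : bellman d A f ≤ c := by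
  refine csSup_le ((S1_nonempty hd).image _) ?_
  rintro _ ⟨B, hB, rfl⟩
  exact h B hB


/-! ### Mollification and the comparison principle -/

open scoped Convolution in
lemma exists_mollify {d : ℕ} (U : (Fin d → ℝ) → ℝ) (hU : Continuous U) (x0 : Fin d → ℝ) (R κ δ0 : ℝ)
    (hκ : 0 < κ) (hδ0 : 0 < δ0) :
    ∃ ρ φ : (Fin d → ℝ) → ℝ, Continuous ρ ∧ HasCompactSupport ρ ∧ (∀ t, 0 ≤ ρ t) ∧ (∫ t, ρ t = 1) ∧
      (∀ t, ρ t ≠ 0 → ‖t‖ < δ0) ∧ ContDiff ℝ 2 φ ∧ (∀ x, φ x = ∫ t, ρ t * U (x - t)) ∧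
      ∀ x ∈ Metric.closedBall x0 R, |φ x - U x| ≤ κ := by
  have huc := (isCompact_closedBall x0 (R + 1)).uniformContinuousOn_of_continuous hU.continuousOn
  obtain ⟨δ1, hδ1, h1⟩ := Metric.uniformContinuousOn_iff.1 huc κ hκ
  set δ := min δ0 (min δ1 1) with hδ
  have hδp : 0 < δ := by positivity
  have hδa : δ ≤ δ0 := min_le_left _ _
  have hδb : δ ≤ δ1 := (min_le_right _ _).trans (min_le_left _ _)
  have hδc : δ ≤ 1 := (min_le_right _ _).trans (min_le_right _ _)
  let b : ContDiffBump (0 : Fin d → ℝ) := ⟨δ / 2, δ, by positivity, by linarith⟩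
  let ρ : (Fin d → ℝ) → ℝ := b.normed MeasureTheory.volume
  refine ⟨ρ, ρ ⋆[ContinuousLinearMap.lsmul ℝ ℝ, MeasureTheory.volume] U, b.continuous_normed,
    b.hasCompactSupport_normed, b.nonneg_normed, b.integral_normed, ?_, ?_, fun x => rfl, ?_⟩
  · intro t ht
    have : t ∈ Function.support (b.normed MeasureTheory.volume) := ht
    rw [b.support_normed_eq, mem_ball_zero_iff] at this
    exact this.trans_le hδa
  · exact b.hasCompactSupport_normed.contDiff_convolution_left _ b.contDiff_normed hU.locallyIntegrable
  · intro x hx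
    have := b.dist_normed_convolution_le (μ := MeasureTheory.volume) (g := U) (x₀ := x) (ε := κ)
      hU.aestronglyMeasurable ?_
    · rwa [Real.dist_eq] at this
    · intro y hy
      have hy' : dist y x < δ := hy
      have hx' : dist x x0 ≤ R := hx
      refine (h1 y ?_ x ?_ (hy'.trans_le hδb)).le
      · have := dist_triangle y x x0
        simp only [Metric.mem_closedBall]; linarith
      · simp only [Metric.mem_closedBall]; linarith

lemma comparison (d : ℕ) (hd : 2 ≤ d) (Ω : Set (Fin d → ℝ)) (hΩo : IsOpen Ω)
    (hΩb : Bornology.IsBounded Ω)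
    (f : (Fin d → ℝ) → ℝ) (hfc : ContinuousOn f (closure Ω))
    (hf0 : ∀ x ∈ closure Ω, 0 ≤ f x)
    (u v : (Fin d → ℝ) → ℝ)
    (husc : UpperSemicontinuousOn u (closure Ω))
    (hsub : ∀ φ : (Fin d → ℝ) → ℝ, ContDiffOn ℝ 2 φ Ω →
      ∀ x ∈ Ω, IsLocalMaxOn (fun y => u y - φ y) Ω x →
        bellman d (hessianM d φ x) (f x) ≤ 0)
    (hlsc : LowerSemicontinuousOn v (closure Ω))
    (hsup : ∀ φ : (Fin d → ℝ) → ℝ, ContDiffOn ℝ 2 φ Ω →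
      ∀ x ∈ Ω, IsLocalMinOn (fun y => v y - φ y) Ω x →
        0 ≤ bellman d (hessianM d φ x) (f x))
    (hbd : ∀ x ∈ frontier Ω, u x ≤ v x) :
    ∀ x ∈ closure Ω, u x ≤ v x := by
  have hpoly : ∀ q : MvPolynomial (Fin d) ℝ, ∀ z ∈ Ω, IsLocalMax (fun y => u y - MvPolynomial.eval y q) z →
      ∀ B ∈ S1set d, f z * B.det ^ ((1 : ℝ) / d) ≤ MvPolynomial.eval z (Lop B q) := by
    intro q z hz hmax B hB
    have h1 := hsub (fun y => MvPolynomial.eval y q) (poly_contDiff q).contDiffOn z hz (hmax.on Ω)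
    have h2 := (bval_le_bellman _ (f z) hB).trans h1
    have h3 := trH_poly B q z
    simp only [bval] at h2
    simp only [trH] at h3
    rw [h3] at h2
    linarith
  by_contra hcon
  push Not at hcon
  obtain ⟨x0, hx0, hlt⟩ := hcon
  have hcl : IsCompact (closure Ω) := hΩb.isCompact_closure
  have hdn : ∀ y : Fin d → ℝ, 0 ≤ y ⬝ᵥ y := fun y => Finset.sum_nonneg fun i _ => mul_self_nonneg (y i)
  obtain ⟨yR, hyR, hR⟩ := hcl.exists_isMaxOn ⟨x0, hx0⟩ (cont_dot d).continuousOn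
  set R := yR ⬝ᵥ yR with hRdef
  have hR0 : 0 ≤ R := hdn yR
  set m := u x0 - v x0 with hm
  have hm0 : 0 < m := by rw [hm]; linarith
  set η := m / (2 * (R + 1)) with hη
  have hη0 : 0 < η := by positivity
  have hηR : η * R < m := by
    have : η * (2 * (R + 1)) = m := by rw [hη]; field_simp
    nlinarith
  have hnv : UpperSemicontinuousOn (fun y => - v y) (closure Ω) := by
    intro x hx c hc
    have := hlsc x hx (-c) (by linarith)
    exact this.mono fun y hy => by linarith
  have hG : UpperSemicontinuousOn (fun y => u y + - v y + η * (y ⬝ᵥ y)) (closure Ω) :=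
    (husc.add hnv).add ((continuous_const.mul (cont_dot d)).continuousOn.upperSemicontinuousOn)
  obtain ⟨xh, hxhc, hxmax⟩ := hG.exists_isMaxOn ⟨x0, hx0⟩ hcl
  have hxmax : ∀ y ∈ closure Ω, u y - v y + η * (y ⬝ᵥ y) ≤ u xh - v xh + η * (xh ⬝ᵥ xh) := by
    intro y hy
    have := hxmax hy
    simp only [Set.mem_ofPred_eq] at this
    linarith
  have hxh : xh ∈ Ω := by
    by_contra hno
    have hfr : xh ∈ frontier Ω := by rw [hΩo.frontier_eq]; exact ⟨hxhc, hno⟩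
    have h1 := hbd xh hfr
    have h2 := hxmax x0 hx0
    have h3 : xh ⬝ᵥ xh ≤ R := hR hxhc
    have h4 : 0 ≤ η * (x0 ⬝ᵥ x0) := mul_nonneg hη0.le (hdn x0)
    have h5 : η * (xh ⬝ᵥ xh) ≤ η * R := mul_le_mul_of_nonneg_left h3 hη0.le
    linarith
  -- radius
  obtain ⟨r1, hr1, hball⟩ := Metric.isOpen_iff.1 hΩo xh hxh
  have hfat : ContinuousAt f xh := hfc.continuousAt (mem_of_superset (hΩo.mem_nhds hxh) subset_closure)
  obtain ⟨r2, hr2, hfr2⟩ := Metric.continuousAt_iff.1 hfat (η / 4) (by positivity)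
  set ρ := min r1 r2 / 4 with hρ
  have hmin : 0 < min r1 r2 := by positivity
  have hρ0 : 0 < ρ := by positivity
  have hρ1 : 3 * ρ < r1 := by have := min_le_left r1 r2; rw [hρ]; linarith
  have hρ2 : 3 * ρ < r2 := by have := min_le_right r1 r2; rw [hρ]; linarith
  have hB3 : Metric.ball xh (3 * ρ) ⊆ Ω := (Metric.ball_subset_ball hρ1.le).trans hball
  have hfb : ∀ z ∈ Metric.ball xh (3 * ρ), |f z - f xh| < η / 4 := by
    intro z hz
    have h : dist z xh < 3 * ρ := hz
    have := hfr2 (h.trans hρ2)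
    rwa [Real.dist_eq] at this
  -- continuity of u
  have hucont : ContinuousOn u (Metric.ball xh (3 * ρ)) := by
    refine continuous_of_sub _ Metric.isOpen_ball (convex_ball _ _) u (husc.mono (hB3.trans subset_closure)) ?_
    intro q z hz hmax B hB
    exact (mul_nonneg (hf0 z (subset_closure (hB3 hz))) (S1_rpow hB).1).trans (hpoly q z (hB3 hz) hmax B hB)
  have hcb : Metric.closedBall xh (2 * ρ) ⊆ Metric.ball xh (3 * ρ) := Metric.closedBall_subset_ball (by linarith)
  obtain ⟨UC, hUC⟩ := ContinuousMap.exists_restrict_eq (Metric.isClosed_closedBall (x := xh) (ε := 2 * ρ))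
    ⟨(Metric.closedBall xh (2 * ρ)).domRestrict u, (hucont.mono hcb).domRestrict⟩
  let U : (Fin d → ℝ) → ℝ := UC
  have hU : Continuous U := UC.continuous
  have hUu : ∀ y ∈ Metric.closedBall xh (2 * ρ), U y = u y := by
    intro y hy
    have := congrArg (fun g => g ⟨y, hy⟩) hUC
    exact this
  set κ := η * ρ ^ 2 / 8 with hκ
  have hκ0 : 0 < κ := by positivity
  obtain ⟨g, ud, hgc, hgs, hg0, hg1, hgt, hudC, hude, hudU⟩ :=
    exists_mollify U hU xh ρ κ (ρ / 2) hκ0 (by positivity)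
  let Q : MvPolynomial (Fin d) ℝ := η • NSQ d - (η / 2) • affP xh 1 (NSQ d)
  have hQe : ∀ y, MvPolynomial.eval y Q = η * (y ⬝ᵥ y) - η / 2 * ((y - xh) ⬝ᵥ (y - xh)) := by
    intro y
    simp only [Q, map_sub, MvPolynomial.smul_eval, affP_eval, eval_NSQ, inv_one, one_smul]
  have hQL : ∀ B ∈ S1set d, ∀ y, MvPolynomial.eval y (Lop B Q) = η := by
    intro B hB y
    simp only [Q, map_sub, LinearMap.map_smul, affP_Lop, Lop_NSQ B hB, MvPolynomial.smul_eval, affP_eval,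
      MvPolynomial.eval_C]
    ring
  let φ : (Fin d → ℝ) → ℝ := fun y => ud y + MvPolynomial.eval y Q
  have hφC : ContDiff ℝ 2 φ := hudC.add (poly_contDiff Q)
  have hcbΩ : Metric.closedBall xh ρ ⊆ Ω := (Metric.closedBall_subset_ball (by linarith)).trans hB3
  have hWu : UpperSemicontinuousOn (fun y => - v y + φ y) (Metric.closedBall xh ρ) :=
    (hnv.mono (hcbΩ.trans subset_closure)).add (hφC.continuous.continuousOn.upperSemicontinuousOn)
  obtain ⟨y0, hy0, hy0max⟩ := hWu.exists_isMaxOn ⟨xh, Metric.mem_closedBall_self hρ0.le⟩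
    (isCompact_closedBall xh ρ)
  have hud : ∀ y ∈ Metric.closedBall xh ρ, |ud y - u y| ≤ κ := by
    intro y hy
    rw [← hUu y (Metric.closedBall_subset_closedBall (by linarith) hy)]
    exact hudU y hy
  have hy0b : y0 ∈ Metric.ball xh ρ := by
    by_contra hno
    have hd0 : ρ ≤ ‖y0 - xh‖ := by
      rw [Metric.mem_ball, dist_eq_norm] at hno; linarith
    have h1 : ρ ^ 2 ≤ (y0 - xh) ⬝ᵥ (y0 - xh) :=
      (pow_le_pow_left₀ hρ0.le hd0 2).trans (norm_sq_le_dot _)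
    have h2 : - v xh + φ xh ≤ - v y0 + φ y0 := hy0max (Metric.mem_closedBall_self hρ0.le)
    simp only [φ, hQe, sub_self, dotProduct_zero, mul_zero, sub_zero] at h2
    have h3 := abs_le.1 (hud y0 hy0)
    have h4 := abs_le.1 (hud xh (Metric.mem_closedBall_self hρ0.le))
    have h5 := hxmax y0 (subset_closure (hcbΩ hy0))
    have h6 : η / 2 * ρ ^ 2 ≤ η / 2 * ((y0 - xh) ⬝ᵥ (y0 - xh)) := mul_le_mul_of_nonneg_left h1 (by positivity)
    have h7 : η / 2 * ρ ^ 2 = 4 * κ := by rw [hκ]; ring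
    linarith [h3.1, h3.2, h4.1, h4.2]
  have hy0Ω : y0 ∈ Ω := hcbΩ hy0
  have hmin : IsLocalMinOn (fun y => v y - φ y) Ω y0 := by
    have hn : Metric.closedBall xh ρ ∈ 𝓝 y0 :=
      mem_of_superset (Metric.isOpen_ball.mem_nhds hy0b) Metric.ball_subset_closedBall
    have h1 : IsLocalMin (fun y => v y - φ y) y0 := by
      filter_upwards [hy0max.isLocalMax hn] with y hy
      linarith
    exact h1.on Ω
  have hfinal := hsup φ hφC.contDiffOn y0 hy0Ω hmin
  have hneg : bellman d (hessianM d φ y0) (f y0) ≤ - (η / 2) := by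
    refine bellman_le hd _ _ _ fun B hB => ?_
    obtain ⟨hB0, hB1⟩ := S1_rpow hB
    set D := B.det ^ ((1 : ℝ) / d) with hD
    have hmol : (f xh - η / 4) * D ≤ trH d B ud y0 := by
      refine mollify_sub hd hB (Metric.ball xh (2 * ρ)) U hU _ ?_ g hgc hgs hg0 hg1 ud hudC hude y0 (ρ / 2)
        (by positivity) ?_
      · intro q z hz hmax
        have hz3 : z ∈ Metric.ball xh (3 * ρ) := hcb (Metric.ball_subset_closedBall hz)
        have hmax' : IsLocalMax (fun y => u y - MvPolynomial.eval y q) z := by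
          filter_upwards [hmax, Metric.isOpen_ball.mem_nhds hz] with y hy hyb
          rwa [hUu y (Metric.ball_subset_closedBall hyb), hUu z (Metric.ball_subset_closedBall hz)] at hy
        refine le_trans ?_ (hpoly q z (hB3 hz3) hmax' B hB)
        refine mul_le_mul_of_nonneg_right ?_ hB0
        have := abs_lt.1 (hfb z hz3)
        linarith [this.1]
      · intro t ht y hy
        have h1 := hgt t ht
        have h2 : ‖y0 - xh‖ < ρ := by rwa [Metric.mem_ball, dist_eq_norm] at hy0b
        rw [Metric.mem_ball, dist_eq_norm]
        have e : y0 - t + y - xh = (y0 - xh) - t + y := by abel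
        rw [e]
        have h3 := norm_add_le ((y0 - xh) - t) y
        have h4 := norm_sub_le (y0 - xh) t
        linarith
    have htr : trH d B φ y0 = trH d B ud y0 + η := by
      have := trH_add d B ud (fun y => MvPolynomial.eval y Q) hudC (poly_contDiff Q) y0
      rw [trH_poly, hQL B hB] at this
      exact this
    have hbv : bval d (hessianM d φ y0) B (f y0) = - trH d B φ y0 + f y0 * D := rfl
    rw [hbv, htr]
    have hfy := abs_lt.1 (hfb y0 (Metric.ball_subset_ball (by linarith) hy0b))
    have h1 : f y0 * D ≤ (f xh + η / 4) * D := mul_le_mul_of_nonneg_right (by linarith [hfy.2]) hB0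
    have h2 : η / 2 * D ≤ η / 2 := mul_le_of_le_one_right (by positivity) hB1
    nlinarith
  linarith


/-- Comparison principle for the Bellman equation: if a subsolution u lies below a
supersolution v on the boundary, then u ≤ v on the closure. -/
theorem stmt_12 (d : ℕ) (hd : 2 ≤ d) (Ω : Set (Fin d → ℝ)) (hΩo : IsOpen Ω)
    (hΩb : Bornology.IsBounded Ω)
    (f : (Fin d → ℝ) → ℝ) (hfc : ContinuousOn f (closure Ω))
    (hf0 : ∀ x ∈ closure Ω, 0 ≤ f x)
    (u v : (Fin d → ℝ) → ℝ)
    (husc : UpperSemicontinuousOn u (closure Ω))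
    (hsub : ∀ φ : (Fin d → ℝ) → ℝ, ContDiffOn ℝ 2 φ Ω →
      ∀ x ∈ Ω, IsLocalMaxOn (fun y => u y - φ y) Ω x →
        bellman d (hessianM d φ x) (f x) ≤ 0)
    (hlsc : LowerSemicontinuousOn v (closure Ω))
    (hsup : ∀ φ : (Fin d → ℝ) → ℝ, ContDiffOn ℝ 2 φ Ω →
      ∀ x ∈ Ω, IsLocalMinOn (fun y => v y - φ y) Ω x →
        0 ≤ bellman d (hessianM d φ x) (f x))
    (hbd : ∀ x ∈ frontier Ω, u x ≤ v x) :
    ∀ x ∈ closure Ω, u x ≤ v x := by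
  exact comparison d hd Ω hΩo hΩb f hfc hf0 u v husc hsub hlsc hsup hbd
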